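/- (Deterministic core of Theorem 1, performance bound of BC.) Let S and A be finite sets, and let D = {(s^1,a^1),…,(s^{|D|},a^{|D|})} be a finite dataset of state–action pairs, with 𝒮_D ⊆ S the set of states appearing in D. Let π be a deterministic policy (a map S → A) with state occupancy measure ρ_π and joint occupancy measure ρ_π(s,a) = ρ_π(s)·1[a = π(s)]; let π_b be a policy with state occupancy measure ρ_{π_b} and joint occupancy measure ρ_{π_b}(s,a) = ρ_{π_b}(s)·π_b(a|s); let ρ_{π_0} be a probability mass function on S (the state occupancy of the initial policy π_0); and let ρ_{π̂_b} be a probability mass function on S supported on 𝒮_D (the state occupancy of the empirical behavior policy). Let Π be the set of all deterministic policies, |Π| = |A|^{|S|}, and let δ > 0. Assume: (i) Σ_{s∈S} ρ_{π_b}(s) · D_TV(δ_{π(s)}, π_b(·|s)) ≤ (1/|D|) Σ_{i=1}^{|D|} 1[π(s^i) ≠ a^i] + sqrt( (log|Π| + log(2/δ)) / (2|D|) ), and (ii) D_TV(ρ_{π̂_b}, ρ_{π_b}) ≤ sqrt( (log|S| + log(2/δ)) / (2|D|) ). Then D_TV(ρ_π(s,a), ρ_{π_b}(s,a)) ≤ (1/2)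 Σ_{s∉𝒮_D} ρ_{π_b}(s) + (1/2) Σ_{s∉𝒮_D} |ρ_π(s) − ρ_{π_0}(s)| + (1/2) Σ_{s∉𝒮_D} |ρ_{π_0}(s) − ρ_{π_b}(s)| + (1/2) Σ_{s∈𝒮_D} |ρ_π(s) − ρ_{π̂_b}(s)| + (1/|D|) Σ_{i=1}^{|D|} 1[π(s^i) ≠ a^i] + sqrt( (log|S| + log(2/δ)) / (2|D|) ) + sqrt( (log|Π| + log(2/δ)) / (2|D|) ). -/

import Mathlib

/-!
Passing from the joint occupancy `ρπ ⊗ π` to `ρb ⊗ πb` through the hybrid `ρb ⊗ π` costs the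
distance between the state occupancies plus the `ρb`-average distance between the policies. The
first cost is an `ℓ¹` distance over the states, where the triangle inequality can be applied through
a different intermediate occupancy on each part: the empirical one on the dataset, the initial one
off it.
-/

section TotalVariation

variable {Z : Type*} [Fintype Z]

/-- The total variation distance between mass functions on a finite type, as half their `ℓ¹`
distance. It is defined for all real-valued functions, normalized or not. -/
noncomputable def tvDist (p q : Z → ℝ) : ℝ := (1 / 2) * ∑ z, |p z - q z|

theorem sum_abs_sub_le_add {ι : Type*} (T : Finset ι) (p q r : ι → ℝ) :
    ∑ i ∈ T, |p i - r i| ≤ ∑ i ∈ T, |p i - q i| + ∑ i ∈ T, |q i - r i| := by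
  rw [← Finset.sum_add_distrib]
  exact Finset.sum_le_sum fun i _ => abs_sub_le (p i) (q i) (r i)

theorem tvDist_triangle (p q r : Z → ℝ) : tvDist p r ≤ tvDist p q + tvDist q r := by
  unfold tvDist
  linarith [sum_abs_sub_le_add Finset.univ p q r]

theorem half_sum_abs_sub_le_tvDist (T : Finset Z) (p q : Z → ℝ) :
    (1 / 2) * ∑ z ∈ T, |p z - q z| ≤ tvDist p q := by
  unfold tvDist
  gcongr
  exact T.subset_univ

theorem tvDist_le_sum_compl_add_sum_add_tvDist [DecidableEq Z] (T : Finset Z) (p q r r' : Z → ℝ) :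
    tvDist p q ≤ (1 / 2) * ∑ z ∈ Tᶜ, |p z - r' z| + (1 / 2) * ∑ z ∈ Tᶜ, |r' z - q z|
      + (1 / 2) * ∑ z ∈ T, |p z - r z| + tvDist r q := by
  have split : tvDist p q = (1 / 2) * ∑ z ∈ T, |p z - q z| + (1 / 2) * ∑ z ∈ Tᶜ, |p z - q z| := by
    rw [tvDist, ← Finset.sum_add_sum_compl T, mul_add]
  linarith [sum_abs_sub_le_add T p r q, sum_abs_sub_le_add Tᶜ p r' q,
    half_sum_abs_sub_le_tvDist T r q]

end TotalVariation

section Occupancy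

variable {S A : Type*}

/-- The joint occupancy measure on state–action pairs of a policy `π` with state occupancy `ρ`. A
policy is encoded by its action probabilities `π s a`; the deterministic policy of a map `f : S → A`
is `fun s => Pi.single (f s) 1`. -/
def jointOccupancy (ρ : S → ℝ) (π : S → A → ℝ) (z : S × A) : ℝ := ρ z.1 * π z.1 z.2

variable [Fintype S] [Fintype A]

theorem tvDist_jointOccupancy_same_policy (ρ ρ' : S → ℝ) {π : S → A → ℝ}
    (hπ : ∀ s, π s ∈ stdSimplex ℝ A) :
    tvDist (jointOccupancy ρ π) (jointOccupancy ρ' π) = tvDist ρ ρ' := by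
  unfold tvDist jointOccupancy
  rw [Fintype.sum_prod_type]
  congr! 2 with s
  calc ∑ a, |ρ s * π s a - ρ' s * π s a|
      = ∑ a, |ρ s - ρ' s| * π s a := by
        congr! 1 with a
        rw [← sub_mul, abs_mul, abs_of_nonneg ((hπ s).1 a)]
    _ = |ρ s - ρ' s| := by rw [← Finset.mul_sum, (hπ s).2, mul_one]

theorem tvDist_jointOccupancy_same_occupancy {ρ : S → ℝ} (hρ : ∀ s, 0 ≤ ρ s) (π π' : S → A → ℝ) :
    tvDist (jointOccupancy ρ π) (jointOccupancy ρ π') = ∑ s, ρ s * tvDist (π s) (π' s) := by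
  unfold tvDist jointOccupancy
  rw [Fintype.sum_prod_type, Finset.mul_sum]
  congr! 1 with s
  simp only [← mul_sub, abs_mul, abs_of_nonneg (hρ s), ← Finset.mul_sum]
  ring

theorem tvDist_jointOccupancy_le (ρ : S → ℝ) {ρ' : S → ℝ} {π : S → A → ℝ} (π' : S → A → ℝ)
    (hρ' : ∀ s, 0 ≤ ρ' s) (hπ : ∀ s, π s ∈ stdSimplex ℝ A) :
    tvDist (jointOccupancy ρ π) (jointOccupancy ρ' π')
      ≤ tvDist ρ ρ' + ∑ s, ρ' s * tvDist (π s) (π' s) := by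
  rw [← tvDist_jointOccupancy_same_policy ρ ρ' hπ,
    ← tvDist_jointOccupancy_same_occupancy hρ' π π']
  exact tvDist_triangle _ _ _

theorem bc_performance_bound_general [DecidableEq S] (T : Finset S)
    (π : S → A → ℝ) (hπ : ∀ s, π s ∈ stdSimplex ℝ A) (πb : S → A → ℝ)
    (ρπ ρb ρ0 ρhat : S → ℝ) (hρb : ∀ s, 0 ≤ ρb s) {εBC εConc : ℝ}
    (hBC : ∑ s, ρb s * tvDist (π s) (πb s) ≤ εBC) (hConc : tvDist ρhat ρb ≤ εConc) :
    tvDist (jointOccupancy ρπ π) (jointOccupancy ρb πb)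
      ≤ (1 / 2) * ∑ s ∈ Tᶜ, |ρπ s - ρ0 s| + (1 / 2) * ∑ s ∈ Tᶜ, |ρ0 s - ρb s|
        + (1 / 2) * ∑ s ∈ T, |ρπ s - ρhat s| + εBC + εConc := by
  linarith [tvDist_jointOccupancy_le ρπ πb hρb hπ,
    tvDist_le_sum_compl_add_sum_add_tvDist T ρπ ρb ρhat ρ0]

end Occupancy

/-- **Theorem 1 (Performance bound of BC), deterministic core.**
Given a dataset `data : Fin n → S × A` with state set `SD`, a deterministic
learned policy `π` with state occupancy `ρπ`, a behavior policy `πb` with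
state occupancy `ρb`, an initial-policy state occupancy `ρ0`, and an empirical
behavior-policy state occupancy `ρhat` supported on `SD`, assuming the BC
generalization bound (i) and the empirical-occupancy concentration bound (ii),
the TV distance between the joint occupancy measures of `π` and `πb` is
bounded by the sum of the initialization gap, the BC gap and the data gap. -/
theorem bc_performance_bound
    {S A : Type*} [Fintype S] [Fintype A] [DecidableEq S] [DecidableEq A]
    (n : ℕ) (hn : 0 < n) (data : Fin n → S × A)
    (SD : Finset S) (hSD : SD = Finset.image (fun i => (data i).1) Finset.univ)
    (π : S → A)
    (πb : S → A → ℝ) (hπb : ∀ s a, 0 ≤ πb s a) (hπbsum : ∀ s, ∑ a, πb s a = 1)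
    (ρπ : S → ℝ) (hρπ : ∀ s, 0 ≤ ρπ s) (hρπsum : ∑ s, ρπ s = 1)
    (ρb : S → ℝ) (hρb : ∀ s, 0 ≤ ρb s) (hρbsum : ∑ s, ρb s = 1)
    (ρ0 : S → ℝ) (hρ0 : ∀ s, 0 ≤ ρ0 s) (hρ0sum : ∑ s, ρ0 s = 1)
    (ρhat : S → ℝ) (hρhat : ∀ s, 0 ≤ ρhat s) (hρhatsum : ∑ s, ρhat s = 1)
    (hsupp : ∀ s ∉ SD, ρhat s = 0)
    (δ : ℝ) (hδ : 0 < δ)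
    (hBC : ∑ s, ρb s * ((1/2) * ∑ a, |(if a = π s then (1:ℝ) else 0) - πb s a|)
        ≤ (1/n : ℝ) * ∑ i, (if π (data i).1 ≠ (data i).2 then (1:ℝ) else 0)
          + Real.sqrt
              ((Real.log ((Fintype.card A : ℝ) ^ Fintype.card S)
                + Real.log (2 / δ)) / (2 * n)))
    (hConc : (1/2) * ∑ s, |ρhat s - ρb s|
        ≤ Real.sqrt ((Real.log (Fintype.card S) + Real.log (2 / δ)) / (2 * n))) :
    (1/2) * ∑ z : S × A,
        |ρπ z.1 * (if z.2 = π z.1 then (1:ℝ) else 0) - ρb z.1 * πb z.1 z.2|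
      ≤ (1/2) * ∑ s ∈ SDᶜ, ρb s
        + (1/2) * ∑ s ∈ SDᶜ, |ρπ s - ρ0 s|
        + (1/2) * ∑ s ∈ SDᶜ, |ρ0 s - ρb s|
        + (1/2) * ∑ s ∈ SD, |ρπ s - ρhat s|
        + (1/n : ℝ) * ∑ i, (if π (data i).1 ≠ (data i).2 then (1:ℝ) else 0)
        + Real.sqrt ((Real.log (Fintype.card S) + Real.log (2 / δ)) / (2 * n))
        + Real.sqrt
            ((Real.log ((Fintype.card A : ℝ) ^ Fintype.card S)
              + Real.log (2 / δ)) / (2 * n)) := by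
  have bound := bc_performance_bound_general SD (fun s => Pi.single (π s) 1)
    (fun s => single_mem_stdSimplex ℝ (π s)) πb ρπ ρb ρ0 ρhat hρb
    (by simpa only [tvDist, Pi.single_apply] using hBC) hConc
  simp only [tvDist, jointOccupancy, Pi.single_apply] at bound
  linarith [Finset.sum_nonneg fun s (_ : s ∈ SDᶜ) => hρb s]
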